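/- ∫₀¹ x²·log²(sin(πx)) dx = 13π²/360 + (1/3)·log²2 + (1/π²)·(log 2)·ζ(3). -/

import Mathlib

open Real

open Filter MeasureTheory Topology

/-!
Write `w = log² (sin (πx))`. Since `x² - x + 1/6 = π⁻² ∑ cos (2πnx) / n²` on `[0, 1]` and `w` is
symmetric about `1/2`, the integral of `x² w` is determined by the cosine coefficients of `w`.
Integrating by parts, the `n`-th cosine coefficient of `log ^ (p + 1) (sin (πx))` becomes the
integral of `log ^ p (sin (πx))` against `cot (πx) sin (2πnx)`, which is a trigonometric polynomial.
Starting from `p = 0`, two such steps give `(log 2 + Hₙ - 1 / (2n)) / n` for the coefficients of `w`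
with `n ≠ 0`; the mean of `w` comes from Parseval's identity for `log (sin (πx))`.
What remains is Euler's sum `∑ Hₙ / n³ = ζ(2)² / 2`.
-/

section EulerSum

theorem hasSum_sub_succ_of_antitone {a : ℕ → ℝ} (ha : Antitone a) {l : ℝ}
    (hl : Tendsto a atTop (𝓝 l)) : HasSum (fun k => a k - a (k + 1)) (a 0 - l) := by
  rw [hasSum_iff_tendsto_nat_of_nonneg fun k => sub_nonneg.mpr (ha k.le_succ)]
  simpa only [Finset.sum_range_sub'] using hl.const_sub (a 0)

theorem hasSum_sub_add_of_antitone {a : ℕ → ℝ} (ha : Antitone a) {l : ℝ}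
    (hl : Tendsto a atTop (𝓝 l)) (n : ℕ) :
    HasSum (fun k => a k - a (k + n)) (∑ i ∈ Finset.range n, (a i - l)) := by
  induction n with
  | zero => simp
  | succ n ih =>
    have hstep : HasSum (fun k => a (k + n) - a (k + n + 1)) (a n - l) := by
      simpa [add_right_comm] using
        hasSum_sub_succ_of_antitone (a := fun k => a (k + n))
          (fun _ _ h => ha (by gcongr)) ((tendsto_add_atTop_iff_nat n).mpr hl)
    rw [Finset.sum_range_succ]
    exact (ih.add hstep).congr_fun fun k => by rw [← add_assoc]; ring

theorem hasSum_one_div_mul_add {n : ℕ} (hn : n ≠ 0) :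
    HasSum (fun k : ℕ => 1 / ((k : ℝ) * (n + k))) ((harmonic n : ℝ) / n) := by
  have hanti : Antitone fun k : ℕ => 1 / ((k : ℝ) + 1) := fun _ _ h => by dsimp only; gcongr
  have h := (hasSum_sub_add_of_antitone hanti tendsto_one_div_add_atTop_nhds_zero_nat n).div_const
    (n : ℝ)
  have hharmonic : (harmonic n : ℝ) = ∑ i ∈ Finset.range n, 1 / ((i : ℝ) + 1) := by simp [harmonic]
  have hn' : (n : ℝ) ≠ 0 := Nat.cast_ne_zero.mpr hn
  rw [← hasSum_nat_add_iff' 1, hharmonic]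
  simp only [Finset.sum_range_one, Nat.cast_zero, zero_mul, div_zero, sub_zero] at h ⊢
  refine h.congr_fun fun k => ?_
  have hk : (k : ℝ) + 1 ≠ 0 := by positivity
  have hkn : (k : ℝ) + n + 1 ≠ 0 := by positivity
  have hnk : (n : ℝ) + (k + 1) ≠ 0 := by positivity
  push_cast
  field_simp
  ring

theorem one_div_sq_mul_add_one_div_sq_mul {x y : ℝ} (hx : 0 ≤ x) (hy : 0 ≤ y) :
    1 / x ^ 2 * (1 / (y * (x + y))) + 1 / y ^ 2 * (1 / (x * (y + x))) =
      1 / x ^ 2 * (1 / y ^ 2) := by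
  rcases hx.eq_or_lt with rfl | hx
  · simp
  rcases hy.eq_or_lt with rfl | hy
  · simp
  rw [add_comm y x]
  field_simp
  ring

theorem hasSum_harmonic_div_pow_three :
    HasSum (fun n : ℕ => (harmonic n : ℝ) / n ^ 3) (π ^ 4 / 72) := by
  let F : ℕ × ℕ → ℝ := fun x => 1 / (x.1 : ℝ) ^ 2 * (1 / (x.2 * (x.1 + x.2)))
  have hnonneg : ∀ x, 0 ≤ F x := fun x => by positivity
  have hprod : HasSum (fun x : ℕ × ℕ => F x + F x.swap) (π ^ 2 / 6 * (π ^ 2 / 6)) :=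
    (hasSum_zeta_two.mul hasSum_zeta_two
      (hasSum_zeta_two.summable.mul_of_nonneg hasSum_zeta_two.summable
        (fun n => by positivity) fun n => by positivity)).congr_fun
      fun x => one_div_sq_mul_add_one_div_sq_mul x.1.cast_nonneg x.2.cast_nonneg
  have hF : Summable F :=
    hprod.summable.of_nonneg_of_le hnonneg fun x => le_add_of_nonneg_right (hnonneg x.swap)
  have hswap : HasSum (fun x : ℕ × ℕ => F x.swap) (∑' x, F x) :=
    (Equiv.prodComm ℕ ℕ).hasSum_iff.mpr hF.hasSum
  have htsum : ∑' x, F x = π ^ 4 / 72 := by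
    linear_combination (hF.hasSum.add hswap).unique hprod / 2
  rw [← htsum]
  refine hF.hasSum.prod_fiberwise fun n => ?_
  rcases eq_or_ne n 0 with rfl | hn
  · simp [F]
  · rw [show (harmonic n : ℝ) / n ^ 3 = 1 / (n : ℝ) ^ 2 * (harmonic n / n) by ring]
    exact (hasSum_one_div_mul_add hn).mul_left _

end EulerSum

theorem hasSum_one_div_nat_pow_re_riemannZeta {k : ℕ} (hk : 1 < k) :
    HasSum (fun n : ℕ => 1 / (n : ℝ) ^ k) (riemannZeta k).re := by
  have hzeta : riemannZeta k = ((∑' n : ℕ, 1 / (n : ℝ) ^ k : ℝ) : ℂ) := by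
    rw [zeta_nat_eq_tsum_of_gt_one hk]
    push_cast
    rfl
  rw [hzeta, Complex.ofReal_re]
  exact (summable_one_div_nat_pow.mpr hk).hasSum

section CosineCoefficients

/-- The integral `∫₀¹ f(x) cos (2πnx) dx`, half the `n`-th coefficient of the Fourier cosine series
of `f` when `n ≠ 0`, and the constant coefficient when `n = 0`. -/
noncomputable def cosCoeff (f : ℝ → ℝ) (n : ℕ) : ℝ :=
  ∫ x in (0 : ℝ)..1, f x * cos (2 * π * n * x)

variable {f : ℝ → ℝ}

theorem cosCoeff_zero (f : ℝ → ℝ) : cosCoeff f 0 = ∫ x in (0 : ℝ)..1, f x := by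
  simp [cosCoeff]

theorem sin_two_pi_mul_nat (n : ℕ) : sin (2 * π * n) = 0 := by
  rw [show 2 * π * n = (2 * n : ℕ) * π by push_cast; ring, sin_nat_mul_pi]

theorem cosCoeff_one (n : ℕ) : cosCoeff 1 n = if n = 0 then 1 else 0 := by
  split_ifs with hn
  · simp [hn, cosCoeff_zero]
  · have hfreq : 2 * π * n ≠ 0 := by positivity
    simp only [cosCoeff, Pi.one_apply, one_mul]
    rw [intervalIntegral.integral_comp_mul_left cos hfreq, integral_cos]
    simp [sin_two_pi_mul_nat]

theorem intervalIntegrable_mul_cos (hf : IntervalIntegrable f volume 0 1) (n : ℕ) :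
    IntervalIntegrable (fun x => f x * cos (2 * π * n * x)) volume 0 1 :=
  hf.mul_continuousOn (by fun_prop)

theorem integral_mul_sum_cos_add_cos (hf : IntervalIntegrable f volume 0 1) (n : ℕ) :
    ∫ x in (0 : ℝ)..1, f x * ∑ k ∈ Finset.range n,
        (cos (2 * π * k * x) + cos (2 * π * (k + 1 : ℕ) * x)) =
      ∑ k ∈ Finset.range n, (cosCoeff f k + cosCoeff f (k + 1)) := by
  have hcos := intervalIntegrable_mul_cos hf
  simp only [Finset.mul_sum, mul_add]
  rw [intervalIntegral.integral_finsetSum fun k _ => (hcos k).add (hcos (k + 1))]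
  exact Finset.sum_congr rfl fun k _ => intervalIntegral.integral_add (hcos k) (hcos (k + 1))

theorem hasSum_mul_cosCoeff (hf : IntervalIntegrable f volume 0 1) {a : ℕ → ℝ} (ha : Summable a)
    {g : ℝ → ℝ} (hg : ∀ x ∈ Set.Icc 0 1, HasSum (fun n : ℕ => a n * cos (2 * π * n * x)) (g x)) :
    HasSum (fun n => a n * cosCoeff f n) (∫ x in (0 : ℝ)..1, f x * g x) := by
  simp only [cosCoeff, ← intervalIntegral.integral_const_mul]
  refine intervalIntegral.hasSum_integral_of_dominated_convergence (fun n x => |a n| * |f x|)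
    (fun n => ?_) (fun n => .of_forall fun x _ => ?_) (.of_forall fun x _ => ha.abs.mul_right _) ?_
    (.of_forall fun x hx => ?_)
  · exact ((intervalIntegrable_mul_cos hf n).const_mul _).aestronglyMeasurable_restrict_uIoc
  · rw [norm_mul, norm_mul, norm_eq_abs, norm_eq_abs]
    gcongr
    exact mul_le_of_le_one_right (abs_nonneg _) (abs_cos_le_one _)
  · simp only [tsum_mul_right]
    exact hf.abs.const_mul _
  · rw [Set.uIoc_of_le zero_le_one] at hx
    simpa only [mul_left_comm] using (hg x (Set.Ioc_subset_Icc_self hx)).mul_left (f x)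

theorem hasSum_one_div_sq_mul_cos {x : ℝ} (hx : x ∈ Set.Icc (0 : ℝ) 1) :
    HasSum (fun n : ℕ => 1 / (n : ℝ) ^ 2 * cos (2 * π * n * x)) (π ^ 2 * (x ^ 2 - x + 1 / 6)) := by
  have hbernoulli : ((Polynomial.bernoulli 2).map (algebraMap ℚ ℝ)).eval x = x ^ 2 - x + 1 / 6 := by
    simp [Polynomial.bernoulli, Finset.sum_range_succ, bernoulli_eq_bernoulli'_of_ne_one]
    ring
  have h := hasSum_one_div_nat_pow_mul_cos one_ne_zero hx
  rw [mul_one, hbernoulli] at h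
  convert h using 1
  simp only [Nat.factorial_two]
  push_cast
  ring

theorem integral_mul_id_of_symm (hf : IntervalIntegrable f volume 0 1)
    (hsymm : ∀ x, f (1 - x) = f x) :
    ∫ x in (0 : ℝ)..1, f x * x = (∫ x in (0 : ℝ)..1, f x) / 2 := by
  have h := intervalIntegral.integral_comp_sub_left (a := 0) (b := 1) (fun x => f x * x) 1
  simp only [hsymm, mul_one_sub, sub_zero, sub_self] at h
  rw [intervalIntegral.integral_sub hf (hf.mul_continuousOn (by fun_prop))] at h
  linear_combination -h / 2

theorem hasSum_cosCoeff_div_sq_of_symm (hf : IntervalIntegrable f volume 0 1)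
    (hsymm : ∀ x, f (1 - x) = f x) :
    HasSum (fun n : ℕ => cosCoeff f n / n ^ 2)
      (π ^ 2 * ((∫ x in (0 : ℝ)..1, x ^ 2 * f x) - cosCoeff f 0 / 3)) := by
  have hsq : IntervalIntegrable (fun x => x ^ 2 * f x) volume 0 1 :=
    hf.continuousOn_mul (by fun_prop)
  have hid : IntervalIntegrable (fun x => f x * x) volume 0 1 :=
    hf.mul_continuousOn continuousOn_id
  have hpoly : ∫ x in (0 : ℝ)..1, f x * (π ^ 2 * (x ^ 2 - x + 1 / 6)) =
      π ^ 2 * ((∫ x in (0 : ℝ)..1, x ^ 2 * f x) - cosCoeff f 0 / 3) := by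
    calc ∫ x in (0 : ℝ)..1, f x * (π ^ 2 * (x ^ 2 - x + 1 / 6))
        = ∫ x in (0 : ℝ)..1, π ^ 2 * (x ^ 2 * f x - f x * x + 1 / 6 * f x) := by
          congr 1; ext x; ring
      _ = π ^ 2 * ((∫ x in (0 : ℝ)..1, x ^ 2 * f x) - (∫ x in (0 : ℝ)..1, f x * x) +
            1 / 6 * ∫ x in (0 : ℝ)..1, f x) := by
          rw [intervalIntegral.integral_const_mul,
            intervalIntegral.integral_add (hsq.sub hid) (hf.const_mul _),
            intervalIntegral.integral_sub hsq hid, intervalIntegral.integral_const_mul]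
      _ = π ^ 2 * ((∫ x in (0 : ℝ)..1, x ^ 2 * f x) - cosCoeff f 0 / 3) := by
          rw [integral_mul_id_of_symm hf hsymm, cosCoeff_zero]; ring
  rw [← hpoly]
  exact (hasSum_mul_cosCoeff hf hasSum_zeta_two.summable
    fun _ => hasSum_one_div_sq_mul_cos).congr_fun fun n => by ring

theorem integral_mul_sin_of_symm (hsymm : ∀ x, f (1 - x) = f x) (n : ℤ) :
    ∫ x in (0 : ℝ)..1, f x * sin (2 * π * n * x) = 0 := by
  have hodd (x : ℝ) : sin (2 * π * n * (1 - x)) = -sin (2 * π * n * x) := by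
    rw [show 2 * π * n * (1 - x) = n * (2 * π) - 2 * π * n * x by ring, sin_int_mul_two_pi_sub]
  have h := intervalIntegral.integral_comp_sub_left (a := 0) (b := 1)
    (fun x => f x * sin (2 * π * n * x)) 1
  simp only [hsymm, hodd, mul_neg, intervalIntegral.integral_neg, sub_zero, sub_self] at h
  linarith

theorem fourierCoeffOn_ofReal_of_symm (hf : IntervalIntegrable f volume 0 1)
    (hsymm : ∀ x, f (1 - x) = f x) (n : ℤ) :
    fourierCoeffOn zero_lt_one (fun x => (f x : ℂ)) n = cosCoeff f n.natAbs := by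
  have hcos : IntervalIntegrable (fun x => ((f x * cos (2 * π * n * x) : ℝ) : ℂ)) volume 0 1 :=
    have h := hf.mul_continuousOn (g := fun x => cos (2 * π * n * x)) (by fun_prop)
    ⟨h.1.ofReal, h.2.ofReal⟩
  have hsin : IntervalIntegrable (fun x => ((f x * sin (2 * π * n * x) : ℝ) : ℂ)) volume 0 1 :=
    have h := hf.mul_continuousOn (g := fun x => sin (2 * π * n * x)) (by fun_prop)
    ⟨h.1.ofReal, h.2.ofReal⟩
  have heuler (x : ℝ) : fourier (-n) (x : AddCircle ((1 : ℝ) - 0)) • (f x : ℂ) =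
      ((f x * cos (2 * π * n * x) : ℝ) : ℂ) -
        ((f x * sin (2 * π * n * x) : ℝ) : ℂ) * Complex.I := by
    have hexp : 2 * (π : ℂ) * Complex.I * ((-n : ℤ) : ℂ) * x / ((1 - 0 : ℝ) : ℂ) =
        ((-(2 * π * n * x) : ℝ) : ℂ) * Complex.I := by push_cast; ring
    rw [fourier_coe_apply, hexp, Complex.exp_mul_I, ← Complex.ofReal_cos, ← Complex.ofReal_sin,
      cos_neg, sin_neg, smul_eq_mul]
    push_cast
    ring
  have hnatAbs (x : ℝ) : cos (2 * π * n.natAbs * x) = cos (2 * π * n * x) := by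
    obtain ⟨m, rfl | rfl⟩ := n.eq_nat_or_neg <;> simp
  rw [fourierCoeffOn_eq_integral]
  simp only [heuler, cosCoeff, hnatAbs]
  rw [intervalIntegral.integral_sub hcos (hsin.mul_const _), intervalIntegral.integral_mul_const,
    intervalIntegral.integral_ofReal, intervalIntegral.integral_ofReal,
    integral_mul_sin_of_symm hsymm]
  simp

theorem hasSum_two_mul_sq_cosCoeff_of_symm (hf : MemLp f 2 (volume.restrict (Set.Ioc 0 1)))
    (hsymm : ∀ x, f (1 - x) = f x) :
    HasSum (fun n : ℕ => 2 * cosCoeff f (n + 1) ^ 2)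
      ((∫ x in (0 : ℝ)..1, f x ^ 2) - cosCoeff f 0 ^ 2) := by
  have hint : IntervalIntegrable f volume 0 1 :=
    (intervalIntegrable_iff_integrableOn_Ioc_of_le zero_le_one).mpr
      (hf.integrable one_le_two)
  have hparseval := (hasSum_sq_fourierCoeffOn zero_lt_one hf.ofReal).nat_add_neg
  simp only [Complex.coe_algebraMap, fourierCoeffOn_ofReal_of_symm hint hsymm, Complex.norm_real,
    norm_eq_abs, sq_abs, Int.natAbs_neg, Int.natAbs_natCast, Int.natAbs_zero, ← two_mul, sub_zero,
    inv_one, one_smul] at hparseval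
  rwa [hasSum_nat_add_iff (f := fun n => 2 * cosCoeff f n ^ 2), Finset.sum_range_one,
    show ∀ I c : ℝ, I - c ^ 2 + 2 * c ^ 2 = I + c ^ 2 from fun I c => by ring]

end CosineCoefficients

section LogSin

theorem continuousOn_mul_log_pow (p : ℕ) :
    ContinuousOn (fun s : ℝ => s * log s ^ p) (Set.Ici 0) := by
  rcases p with _ | p
  · simp only [pow_zero, mul_one]
    fun_prop
  -- `s log ^ q s = (q t log t) ^ q` for `t = s ^ (1 / q)`, and `t log t` is continuous.
  have hcont : Continuous fun s : ℝ =>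
      ((p + 1) * (s ^ (1 / (p + 1) : ℝ) * log (s ^ (1 / (p + 1) : ℝ)))) ^ (p + 1) := by
    have hroot : Continuous fun s : ℝ => s ^ (1 / (p + 1) : ℝ) :=
      continuous_rpow_const (by positivity)
    exact ((continuous_mul_log.comp hroot).const_mul _).pow _
  refine hcont.continuousOn.congr fun s hs => ?_
  dsimp only
  rcases (Set.mem_Ici.mp hs).eq_or_lt with rfl | hs
  · have hp : (1 / (p + 1) : ℝ) ≠ 0 := by positivity
    rw [zero_rpow hp, log_zero]
    simp
  · have hpow : (s ^ (1 / (p + 1) : ℝ)) ^ (p + 1) = s := by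
      rw [one_div]
      exact_mod_cast rpow_inv_natCast_pow hs.le p.succ_ne_zero
    have hp : (p + 1 : ℝ) ≠ 0 := by positivity
    rw [log_rpow hs, mul_left_comm, mul_pow, hpow, ← mul_assoc, mul_one_div_cancel hp, one_mul]

theorem intervalIntegrable_log_pow (p : ℕ) {b : ℝ} (hb : 0 ≤ b) :
    IntervalIntegrable (fun x => log x ^ p) volume 0 b := by
  have hcont : Continuous fun x : ℝ => 2 ^ p * (√x * log √x ^ p) :=
    ((continuousOn_mul_log_pow p).comp_continuous continuous_sqrt sqrt_nonneg).const_mul _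
  have hrpow : IntervalIntegrable (fun x : ℝ => x ^ (-(1 / 2) : ℝ)) volume 0 b :=
    intervalIntegral.intervalIntegrable_rpow' (by norm_num)
  refine (hrpow.mul_continuousOn hcont.continuousOn).congr fun x hx => ?_
  rw [Set.uIoc_of_le hb] at hx
  have hsqrt : x ^ (-(1 / 2) : ℝ) * √x = 1 := by
    rw [sqrt_eq_rpow, ← rpow_add hx.1, neg_add_cancel, rpow_zero]
  calc x ^ (-(1 / 2) : ℝ) * (2 ^ p * (√x * log √x ^ p))
      = x ^ (-(1 / 2) : ℝ) * √x * (2 * log √x) ^ p := by ring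
    _ = log x ^ p := by rw [hsqrt, log_sqrt hx.1.le]; ring

/-- The function `x ↦ log (sin (πx))`, meant for `0 < x < 1`; its square is the logarithmic factor
of the integrand, and its value at both endpoints is `log 0 = 0`. -/
noncomputable def logSinPi (x : ℝ) : ℝ := log (sin (π * x))

theorem logSinPi_one_sub (x : ℝ) : logSinPi (1 - x) = logSinPi x := by
  rw [logSinPi, mul_one_sub, sin_pi_sub, logSinPi]

theorem measurable_logSinPi : Measurable logSinPi :=
  measurable_log.comp (by fun_prop)

theorem abs_logSinPi_le {x : ℝ} (hx : x ∈ Set.Ioc (0 : ℝ) (1 / 2)) :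
    |logSinPi x| ≤ |log (2 * x)| := by
  have hle : 2 * x ≤ sin (π * x) := by
    have h := mul_le_sin (x := π * x) (by have := hx.1; positivity) (by nlinarith [pi_pos, hx.2])
    rwa [div_mul_eq_mul_div, mul_left_comm, mul_div_cancel_left₀ _ pi_ne_zero] at h
  have hpos : 0 < 2 * x := by linarith [hx.1]
  have hlog : log (2 * x) ≤ logSinPi x := log_le_log hpos hle
  have hnonpos : logSinPi x ≤ 0 := log_nonpos (hpos.trans_le hle).le (sin_le_one _)
  rw [abs_of_nonpos hnonpos, abs_of_nonpos (hlog.trans hnonpos)]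
  exact neg_le_neg hlog

theorem intervalIntegrable_logSinPi_pow (p : ℕ) :
    IntervalIntegrable (logSinPi ^ p) volume 0 1 := by
  have hbound : IntervalIntegrable (fun x => log (2 * x) ^ p) volume 0 (1 / 2) := by
    simpa using (intervalIntegrable_log_pow p zero_le_one).comp_mul_left (c := 2)
  have hleft : IntervalIntegrable (logSinPi ^ p) volume 0 (1 / 2) := by
    refine hbound.mono_fun (measurable_logSinPi.pow_const p).aestronglyMeasurable ?_
    filter_upwards [ae_restrict_mem measurableSet_uIoc] with x hx
    rw [Set.uIoc_of_le (by norm_num)] at hx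
    simp only [Pi.pow_apply, norm_pow, norm_eq_abs]
    exact pow_le_pow_left₀ (abs_nonneg _) (abs_logSinPi_le hx) p
  have hright : IntervalIntegrable (logSinPi ^ p) volume (1 / 2) 1 := by
    have h := (hleft.comp_sub_left 1).symm
    simp only [Pi.pow_apply, logSinPi_one_sub] at h
    rwa [sub_zero, sub_half] at h
  exact hleft.trans hright

theorem sin_mul_sum_cos_add_cos (θ : ℝ) (n : ℕ) :
    sin θ * ∑ k ∈ Finset.range n, (cos (2 * k * θ) + cos (2 * (k + 1 : ℕ) * θ)) =
      cos θ * sin (2 * n * θ) := by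
  induction n with
  | zero => simp
  | succ n ih =>
    have hangle : 2 * ((n + 1 : ℕ) : ℝ) * θ = 2 * n * θ + 2 * θ := by push_cast; ring
    rw [Finset.sum_range_succ, mul_add, ih, hangle, sin_add, cos_add, sin_two_mul, cos_two_mul]
    linear_combination (-2 * cos θ * sin (2 * n * θ)) * sin_sq_add_cos_sq θ

theorem hasDerivAt_logSinPi {x : ℝ} (hx : sin (π * x) ≠ 0) :
    HasDerivAt logSinPi (π * cos (π * x) / sin (π * x)) x :=
  ((((hasDerivAt_id x).const_mul π).sin).log hx).congr_deriv
    (by simp [mul_comm])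

theorem hasDerivAt_logSinPi_pow_mul_sin (p n : ℕ) {x : ℝ} (hx : sin (π * x) ≠ 0) :
    HasDerivAt (fun x => logSinPi x ^ (p + 1) * sin (2 * π * n * x))
      ((p + 1) * π * (logSinPi x ^ p * ∑ k ∈ Finset.range n,
          (cos (2 * π * k * x) + cos (2 * π * (k + 1 : ℕ) * x))) +
        2 * π * n * (logSinPi x ^ (p + 1) * cos (2 * π * n * x))) x := by
  have hangle (k : ℕ) : 2 * π * k * x = 2 * k * (π * x) := by ring
  have hcot : ∑ k ∈ Finset.range n, (cos (2 * π * k * x) + cos (2 * π * (k + 1 : ℕ) * x)) =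
      cos (π * x) * sin (2 * π * n * x) / sin (π * x) := by
    rw [eq_div_iff hx, mul_comm]
    simpa only [hangle] using sin_mul_sum_cos_add_cos (π * x) n
  have hsin := ((hasDerivAt_id x).const_mul (2 * π * n)).sin
  refine (((hasDerivAt_logSinPi hx).pow (p + 1)).mul hsin).congr_deriv ?_
  rw [hcot]
  simp only [Pi.pow_apply, id_eq, Nat.add_sub_cancel]
  push_cast
  ring

theorem continuousOn_logSinPi_pow_mul_sin (p n : ℕ) :
    ContinuousOn (fun x => logSinPi x ^ p * sin (2 * π * n * x)) (Set.Icc 0 1) := by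
  -- Chebyshev: `sin (2nθ) = U₂ₙ₋₁(cos θ) sin θ`, and the factor `sin θ` tames the logarithm.
  have hchebyshev (x : ℝ) : sin (2 * π * n * x) =
      (Polynomial.Chebyshev.U ℝ (2 * n - 1)).eval (cos (π * x)) * sin (π * x) := by
    rw [Polynomial.Chebyshev.U_real_cos]
    push_cast
    ring_nf
  have hlog : ContinuousOn (fun x => sin (π * x) * log (sin (π * x)) ^ p) (Set.Icc 0 1) :=
    (continuousOn_mul_log_pow p).comp (by fun_prop) fun x hx => sin_nonneg_of_nonneg_of_le_pi
      (mul_nonneg pi_pos.le hx.1) (mul_le_of_le_one_right pi_pos.le hx.2)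
  have hcont := hlog.mul (g := fun x => (Polynomial.Chebyshev.U ℝ (2 * n - 1)).eval (cos (π * x)))
    (by fun_prop)
  refine hcont.congr fun x _ => ?_
  simp only [hchebyshev, logSinPi, Pi.mul_apply]
  ring

theorem sin_pi_mul_pos {x : ℝ} (hx : x ∈ Set.Ioo (0 : ℝ) 1) : 0 < sin (π * x) :=
  sin_pos_of_pos_of_lt_pi (mul_pos pi_pos hx.1) (mul_lt_of_lt_one_right pi_pos hx.2)

theorem two_mul_cosCoeff_logSinPi_pow_succ (p n : ℕ) :
    2 * n * cosCoeff (logSinPi ^ (p + 1)) n = -((p + 1) * ∑ k ∈ Finset.range n,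
      (cosCoeff (logSinPi ^ p) k + cosCoeff (logSinPi ^ p) (k + 1))) := by
  have hp := intervalIntegrable_logSinPi_pow p
  have hsum : IntervalIntegrable (fun x => logSinPi x ^ p * ∑ k ∈ Finset.range n,
      (cos (2 * π * k * x) + cos (2 * π * (k + 1 : ℕ) * x))) volume 0 1 :=
    hp.mul_continuousOn (by fun_prop)
  have hcos : IntervalIntegrable (fun x => logSinPi x ^ (p + 1) * cos (2 * π * n * x)) volume 0 1 :=
    intervalIntegrable_mul_cos (intervalIntegrable_logSinPi_pow (p + 1)) n
  have hftc := intervalIntegral.integral_eq_sub_of_hasDerivAt_of_le zero_le_one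
    (continuousOn_logSinPi_pow_mul_sin (p + 1) n)
    (fun x hx => hasDerivAt_logSinPi_pow_mul_sin p n (sin_pi_mul_pos hx).ne')
    ((hsum.const_mul _).add (hcos.const_mul _))
  have hkernel := integral_mul_sum_cos_add_cos hp n
  simp only [Pi.pow_apply] at hkernel
  rw [intervalIntegral.integral_add (hsum.const_mul _) (hcos.const_mul _),
    intervalIntegral.integral_const_mul, intervalIntegral.integral_const_mul, hkernel,
    mul_one, mul_zero, sin_two_pi_mul_nat, sin_zero, mul_zero, mul_zero, sub_zero] at hftc
  refine mul_left_cancel₀ pi_ne_zero ?_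
  simp only [cosCoeff, Pi.pow_apply] at hftc ⊢
  linear_combination hftc

theorem cosCoeff_logSinPi_zero : cosCoeff logSinPi 0 = -log 2 := by
  simp only [cosCoeff_zero, logSinPi]
  rw [intervalIntegral.integral_comp_mul_left (fun x => log (sin x)) pi_ne_zero, mul_zero, mul_one,
    integral_log_sin_zero_pi, smul_eq_mul]
  field_simp

theorem cosCoeff_logSinPi {n : ℕ} (hn : n ≠ 0) : cosCoeff logSinPi n = -(1 / (2 * n)) := by
  have hsum : ∑ k ∈ Finset.range n, (cosCoeff 1 k + cosCoeff 1 (k + 1)) = 1 := by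
    simp [cosCoeff_one, Nat.pos_of_ne_zero hn]
  have h := two_mul_cosCoeff_logSinPi_pow_succ 0 n
  rw [zero_add, pow_one, pow_zero, hsum] at h
  field_simp
  linear_combination h

theorem sum_cosCoeff_logSinPi {n : ℕ} (hn : n ≠ 0) :
    ∑ k ∈ Finset.range n, (cosCoeff logSinPi k + cosCoeff logSinPi (k + 1)) =
      -(log 2 + harmonic n - 1 / (2 * n)) := by
  induction n, Nat.one_le_iff_ne_zero.mpr hn using Nat.le_induction with
  | base =>
    simp only [Finset.sum_range_one, zero_add, cosCoeff_logSinPi_zero,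
      cosCoeff_logSinPi one_ne_zero, harmonic_succ, harmonic_zero]
    push_cast
    ring
  | succ n hn ih =>
    rw [Finset.sum_range_succ, ih (by lia), cosCoeff_logSinPi (by lia), cosCoeff_logSinPi (by lia),
      harmonic_succ]
    push_cast
    field_simp
    ring

theorem cosCoeff_logSinPi_sq {n : ℕ} (hn : n ≠ 0) :
    cosCoeff (logSinPi ^ 2) n = (log 2 + harmonic n - 1 / (2 * n)) / n := by
  have h := two_mul_cosCoeff_logSinPi_pow_succ 1 n
  rw [pow_one, sum_cosCoeff_logSinPi hn] at h
  rw [eq_div_iff (Nat.cast_ne_zero.mpr hn)]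
  push_cast at h
  linear_combination h / 2

theorem memLp_two_logSinPi : MemLp logSinPi 2 (volume.restrict (Set.Ioc 0 1)) :=
  (memLp_two_iff_integrable_sq measurable_logSinPi.aestronglyMeasurable).mpr
    ((intervalIntegrable_iff_integrableOn_Ioc_of_le zero_le_one).mp
      (intervalIntegrable_logSinPi_pow 2))

theorem cosCoeff_logSinPi_sq_zero : cosCoeff (logSinPi ^ 2) 0 = log 2 ^ 2 + π ^ 2 / 12 := by
  have hparseval := hasSum_two_mul_sq_cosCoeff_of_symm memLp_two_logSinPi logSinPi_one_sub
  have hzeta : HasSum (fun n : ℕ => 1 / ((n + 1 : ℕ) : ℝ) ^ 2) (π ^ 2 / 6) := by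
    simpa using (hasSum_nat_add_iff' 1).mpr hasSum_zeta_two
  have h := hparseval.unique ((hzeta.mul_left (1 / 2)).congr_fun fun n => by
    rw [cosCoeff_logSinPi n.succ_ne_zero]; ring)
  rw [cosCoeff_logSinPi_zero] at h
  simp only [cosCoeff_zero, Pi.pow_apply]
  linear_combination h

theorem hasSum_cosCoeff_logSinPi_sq_div_sq :
    HasSum (fun n : ℕ => cosCoeff (logSinPi ^ 2) n / n ^ 2)
      (log 2 * (riemannZeta 3).re + π ^ 4 / 120) := by
  have hzeta := hasSum_one_div_nat_pow_re_riemannZeta (k := 3) (by norm_num)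
  have h := ((hzeta.mul_left (log 2)).add hasSum_harmonic_div_pow_three).sub
    (hasSum_zeta_four.mul_left (1 / 2))
  rw [show log 2 * (riemannZeta 3).re + π ^ 4 / 120 =
    log 2 * (riemannZeta 3).re + π ^ 4 / 72 - 1 / 2 * (π ^ 4 / 90) by ring]
  refine h.congr_fun fun n => ?_
  rcases eq_or_ne n 0 with rfl | hn
  · simp
  · rw [cosCoeff_logSinPi_sq hn]
    field_simp

end LogSin

/-- `∫₀¹ x²·log²(sin(πx)) dx = 13π²/360 + (1/3)·log²2 + (1/π²)·(log 2)·ζ(3)`. -/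
theorem integral_xsq_logsq_sin :
    ∫ x in (0:ℝ)..1, x ^ 2 * Real.log (Real.sin (π * x)) ^ 2 =
      13 * π ^ 2 / 360 + (1 / 3) * Real.log 2 ^ 2
        + (1 / π ^ 2) * Real.log 2 * (riemannZeta 3).re := by
  have hsymm (x : ℝ) : (logSinPi ^ 2) (1 - x) = (logSinPi ^ 2) x := by
    simp only [Pi.pow_apply, logSinPi_one_sub]
  have h := (hasSum_cosCoeff_div_sq_of_symm (intervalIntegrable_logSinPi_pow 2) hsymm).unique
    hasSum_cosCoeff_logSinPi_sq_div_sq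
  rw [cosCoeff_logSinPi_sq_zero] at h
  simp only [Pi.pow_apply, logSinPi] at h
  have hpi : π ^ 2 * (1 / π ^ 2) = 1 := mul_one_div_cancel (by positivity)
  refine mul_left_cancel₀ (pow_ne_zero 2 pi_ne_zero) ?_
  linear_combination h - log 2 * (riemannZeta 3).re * hpi
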